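/- arXiv:2402.07825 — 2 statements merged into one kernel-verified Lean document; each statement's English description precedes it below -/
import Mathlib

section
/- Let T_1 and T_2 be two independent uniformly random spanning trees of K_n and let W = |E(T_1) ∩ E(T_2)| be the number of shared edges. Then the total variation distance between the law of W and the Poisson distribution with mean 2 is O(1/n). -/
open SimpleGraph

/-- The probability that two independent uniformly random spanning trees of
`K_n` share exactly `j` edges. -/
noncomputable def sharedEdgesPMF (n j : ℕ) : ℝ :=
  (Nat.card {p : SimpleGraph (Fin n) × SimpleGraph (Fin n) //
      p.1.IsTree ∧ p.2.IsTree ∧ Nat.card (p.1.edgeSet ∩ p.2.edgeSet : Set (Sym2 (Fin n))) = j} : ℝ)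
    / (Nat.card {T : SimpleGraph (Fin n) // T.IsTree} : ℝ) ^ 2

lemma desc_lower (n : ℕ) (hn : 1 ≤ n) (k : ℕ) :
    0 ≤ ((n-1).descFactorial k : ℝ) / (n:ℝ)^k ∧ ((n-1).descFactorial k : ℝ) / (n:ℝ)^k ≤ 1 ∧ 
    1 - (k:ℝ)^2/n ≤ ((n-1).descFactorial k : ℝ) / (n:ℝ)^k := by
  have hn' : (0:ℝ) < n := by exact_mod_cast hn
  induction k with
  | zero => simp
  | succ k ih =>
    obtain ⟨h0, h1, h2⟩ := ih
    have e : ((n-1).descFactorial (k+1) : ℝ) / (n:ℝ)^(k+1) =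
       (((n-1-k : ℕ) : ℝ) / n) * (((n-1).descFactorial k : ℝ) / (n:ℝ)^k) := by
      rw [Nat.descFactorial_succ, pow_succ]; push_cast; field_simp
    rw [e]
    set x := ((n-1).descFactorial k : ℝ) / (n:ℝ)^k
    have a1 : ((n-1-k : ℕ) : ℝ) / n ≤ 1 := by
      rw [div_le_one hn']; exact_mod_cast (by omega)
    have a0 : 0 ≤ ((n-1-k : ℕ) : ℝ) / n := by positivity
    have a2 : 1 - ((k:ℝ)+1)/n ≤ ((n-1-k : ℕ) : ℝ) / n := by
      have : (n:ℝ) ≤ ((n-1-k : ℕ) : ℝ) + (k+1) := by exact_mod_cast (by omega)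
      have h : ((n:ℝ) - (k+1))/n ≤ ((n-1-k : ℕ) : ℝ) / n := by gcongr; linarith
      rwa [sub_div, div_self hn'.ne'] at h
    refine ⟨mul_nonneg a0 h0, mul_le_one₀ a1 h0 h1, ?_⟩
    have b : (1 - ((k:ℝ)+1)/n) * x ≤ ((n-1-k : ℕ) : ℝ) / n * x := by gcongr
    have b2 : ((k:ℝ)+1)/n * x ≤ ((k:ℝ)+1)/n := mul_le_of_le_one_right (by positivity) h1
    have b3 : (((k+1:ℕ):ℝ))^2/n = (k:ℝ)^2/n + ((k:ℝ)+1)/n + k/n := by push_cast; ring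
    have : 0 ≤ (k:ℝ)/n := by positivity
    rw [b3]; linarith

lemma binom_inv (j w K : ℕ) (hw : w < K) :
    ∑ k ∈ Finset.range K, (-1:ℝ)^(k+j) * (k.choose j) * (w.choose k) = if w = j then 1 else 0 := by
  have h1 : ∑ k ∈ Finset.range K, (-1:ℝ)^(k+j) * (k.choose j) * (w.choose k)
      = ∑ k ∈ Finset.range (w+1), (-1:ℝ)^(k+j) * (k.choose j) * (w.choose k) := by
    symm
    apply Finset.sum_subset
    · intro x; simp; omega
    · intro x _ hx
      have : w.choose x = 0 := Nat.choose_eq_zero_of_lt (by simpa using hx)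
      simp [this]
  rw [h1]
  rcases lt_or_ge w j with h | h
  · rw [if_neg (by omega)]
    apply Finset.sum_eq_zero
    intro k hk
    have : k.choose j = 0 := Nat.choose_eq_zero_of_lt (by simp at hk; omega)
    simp [this]
  · obtain ⟨d, rfl⟩ := Nat.exists_eq_add_of_le h
    rw [show j + d + 1 = j + (d+1) by ring, Finset.sum_range_add, Finset.sum_eq_zero, zero_add]
    · have : ∀ i ∈ Finset.range (d+1), (-1:ℝ)^(j+i+j) * ((j+i).choose j) * ((j+d).choose (j+i))
        = ((j+d).choose j) * ((((-1)^i * (d.choose i) : ℤ)) : ℝ) := by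
        intro i hi
        have hh := @Nat.choose_mul (j+d) (j+i) j 
        have hh := hh (by omega)
        simp at hh
        have : (-1:ℝ)^(j+i+j) = (-1)^i := by
          rw [show j+i+j = i + 2*j by ring, pow_add, pow_mul]; simp
        rw [this]
        have hh' : ((j+d).choose (j+i) : ℝ) * ((j+i).choose j) = (j+d).choose j * d.choose i := by
          exact_mod_cast hh
        push_cast
        linear_combination (-1:ℝ)^i * hh'
      rw [Finset.sum_congr rfl this, ← Finset.mul_sum, ← Int.cast_sum, Int.alternating_sum_range_choose]
      by_cases hd : d = 0 <;> simp [hd]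
    · intro k hk
      have : k.choose j = 0 := Nat.choose_eq_zero_of_lt (by simpa using hk)
      simp [this]

lemma poisson_inv (j : ℕ) :
    HasSum (fun k : ℕ => (-1:ℝ)^(k+j) * (k.choose j) * (2^k / k.factorial))
      (Real.exp (-2) * 2^j / j.factorial) := by
  have h := (NormedSpace.expSeries_div_hasSum_exp (-2:ℝ)).mul_right ((2:ℝ)^j / j.factorial)
  rw [← Real.exp_eq_exp_ℝ] at h
  rw [← hasSum_nat_add_iff' j, Finset.sum_eq_zero, sub_zero]
  · have hfun : (fun i : ℕ => (-1:ℝ)^(i+j+j) * ((i+j).choose j) * (2^(i+j) / (i+j).factorial))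
        = fun i : ℕ => (-2:ℝ)^i / i.factorial * ((2:ℝ)^j / j.factorial) := by
      funext i
      have : (-1:ℝ)^(i+j+j) = (-1)^i := by
          rw [show i+j+j = i + 2*j by ring, pow_add, pow_mul]; simp
      rw [this, show (-2:ℝ) = (-1)*2 by norm_num, mul_pow, pow_add]
      have := Nat.add_choose_mul_factorial_mul_factorial i j
      have h2 : ((i+j).choose j : ℝ) * i.factorial * j.factorial = (i+j).factorial := by
        rw [← this]; push_cast; ring
      rw [← h2]
      have : ((i+j).choose j : ℝ) ≠ 0 := by
        exact_mod_cast (Nat.choose_pos (by omega)).ne'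
      have := Nat.factorial_ne_zero i
      have := Nat.factorial_ne_zero j
      field_simp
    rw [hfun, mul_div_assoc]
    exact h
  · intro k hk
    have : k.choose j = 0 := Nat.choose_eq_zero_of_lt (by simpa using hk)
    simp [this]

/-- dominating series -/
lemma summ_dom : Summable (fun k : ℕ => (2:ℝ)^k * (2^k / (k.factorial:ℝ) * (2 * (k:ℝ)^2))) := by
  have h := Real.summable_pow_div_factorial (4*4)
  refine Summable.of_nonneg_of_le (fun k => by positivity) (fun k => ?_) (h.mul_left 2)
  have : (k:ℝ)^2 ≤ 4^k := by
    have : (k:ℝ) ≤ 2^k := by exact_mod_cast Nat.lt_two_pow_self.le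
    calc (k:ℝ)^2 ≤ (2^k)^2 := by gcongr
      _ = 4^k := by rw [← pow_mul, mul_comm, pow_mul]; norm_num
  have e : (2:ℝ)^k*2^k = 4^k := by rw [← mul_pow]; norm_num
  calc (2:ℝ)^k * (2^k / (k.factorial:ℝ) * (2 * (k:ℝ)^2)) = 2 * ((4:ℝ)^k / (k.factorial:ℝ) * (k:ℝ)^2) := by rw [← e]; ring
    _ ≤ 2 * ((4:ℝ)^k / (k.factorial:ℝ) * 4^k) := by gcongr
    _ = _ := by rw [mul_pow]; ring

lemma tv_bound (P B : ℕ → ℝ) (n : ℕ) (_hn : 1 ≤ n) (hB0 : ∀ k, n ≤ k → B k = 0)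
    (hP : ∀ j, P j = ∑ k ∈ Finset.range n, (-1:ℝ)^(k+j) * (k.choose j) * B k)
    (hD : ∀ k, |B k - 2^k / k.factorial| ≤ 2^k / (k.factorial:ℝ) * (2 * (k:ℝ)^2) / n) :
    ∑' j : ℕ, |P j - Real.exp (-2) * 2 ^ j / (Nat.factorial j : ℝ)| ≤
      (∑' k : ℕ, (2:ℝ)^k * (2^k / (k.factorial:ℝ) * (2 * (k:ℝ)^2))) / (n:ℝ) := by
  set D := fun k => B k - 2^k / (k.factorial : ℝ)
  have hsum : Summable (fun k => (2:ℝ)^k * |D k|) := by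
    refine Summable.of_nonneg_of_le (fun k => by positivity) (fun k => ?_) (summ_dom.div_const (n:ℝ))
    rw [mul_div_assoc]
    exact mul_le_mul_of_nonneg_left (hD k) (by positivity)
  have hch : ∀ j k : ℕ, (k.choose j : ℝ) ≤ 2^k := fun j k => by exact_mod_cast Nat.choose_le_two_pow k j
  have hsj : ∀ j, Summable (fun k : ℕ => (k.choose j : ℝ) * |D k|) := fun j =>
    Summable.of_nonneg_of_le (fun k => by positivity)
      (fun k => mul_le_mul_of_nonneg_right (hch j k) (abs_nonneg _)) hsum
  have habs : ∀ j k : ℕ, |(-1:ℝ)^(k+j) * (k.choose j) * D k| = (k.choose j : ℝ) * |D k| := by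
    intro j k; simp [abs_mul]
  have hj : ∀ j, |P j - Real.exp (-2) * 2 ^ j / (Nat.factorial j : ℝ)| ≤ ∑' k : ℕ, (k.choose j : ℝ) * |D k| := by
    intro j
    have h1 : HasSum (fun k => (-1:ℝ)^(k+j) * (k.choose j) * B k) (P j) := by
      rw [hP]
      apply hasSum_sum_of_ne_finset_zero
      intro k hk
      rw [hB0 k (by simpa using hk), mul_zero]
    have h2 := h1.sub (poisson_inv j)
    have h3 : HasSum (fun k => (-1:ℝ)^(k+j) * (k.choose j) * D k) (P j - Real.exp (-2) * 2 ^ j / (Nat.factorial j)) := by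
      have hfun : (fun k : ℕ => (-1:ℝ)^(k+j) * (k.choose j) * D k) = fun k : ℕ =>
          (-1:ℝ)^(k+j) * (k.choose j) * B k - (-1:ℝ)^(k+j) * (k.choose j) * (2^k / k.factorial) := by
        funext k; simp only [D]; ring
      rw [hfun]; exact h2
    rw [← h3.tsum_eq]
    have := norm_tsum_le_tsum_norm (f := fun k => (-1:ℝ)^(k+j) * (k.choose j) * D k) (by
      simp only [Real.norm_eq_abs, habs]; exact hsj j)
    simpa only [Real.norm_eq_abs, habs] using this
  apply Real.tsum_le_of_sum_range_le (fun _ => abs_nonneg _)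
  intro J
  calc _ ≤ ∑ j ∈ Finset.range J, ∑' k : ℕ, (k.choose j : ℝ) * |D k| := Finset.sum_le_sum fun j _ => hj j
    _ = ∑' k : ℕ, ∑ j ∈ Finset.range J, (k.choose j : ℝ) * |D k| := 
        (Summable.tsum_finsetSum fun j _ => hsj j).symm
    _ ≤ ∑' k : ℕ, (2:ℝ)^k * (2^k / (k.factorial:ℝ) * (2 * (k:ℝ)^2)) / n := by
        have hle : ∀ k : ℕ, ∑ j ∈ Finset.range J, (k.choose j : ℝ) * |D k| ≤ 2^k * |D k| := by
          intro k
          rw [← Finset.sum_mul]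
          refine mul_le_mul_of_nonneg_right ?_ (abs_nonneg _)
          have : ∑ j ∈ Finset.range J, k.choose j ≤ 2^k := by
            rw [← Nat.sum_range_choose k]
            calc _ ≤ ∑ j ∈ Finset.range (max J (k+1)), k.choose j := 
                    Finset.sum_le_sum_of_subset (by intro x; simp; omega)
              _ = _ := by
                symm
                apply Finset.sum_subset
                · intro x; simp; omega
                · intro x _ hx
                  exact Nat.choose_eq_zero_of_lt (by simpa using hx)
          exact_mod_cast this
        refine Summable.tsum_le_tsum (fun k => (hle k).trans ?_) (Summable.of_nonneg_of_le (fun k => Finset.sum_nonneg fun j _ => by positivity) hle hsum) (summ_dom.div_const (n:ℝ))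
        rw [mul_div_assoc]
        exact mul_le_mul_of_nonneg_left (hD k) (by positivity)
    _ = _ := tsum_div_const

open Finset in
lemma abstract_main {α β : Type*} [DecidableEq α] [DecidableEq β] (T : Finset α) (E : α → Finset β) (U : Finset β)
    (n : ℕ) (hn : 1 ≤ n) (hT : T.Nonempty) (hEU : ∀ t ∈ T, E t ⊆ U) (hU : 2 * U.card ≤ n^2)
    (hE : ∀ t ∈ T, (E t).card = n - 1)
    (hS : ∀ S : Finset β, n^S.card * #{t ∈ T | S ⊆ E t} ≤ 2^S.card * #T) :
    ∑' j : ℕ, |(#{p ∈ T ×ˢ T | #(E p.1 ∩ E p.2) = j} : ℝ) / (#T : ℝ)^2 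
        - Real.exp (-2) * 2 ^ j / (Nat.factorial j : ℝ)| ≤
      (∑' k : ℕ, (2:ℝ)^k * (2^k / (k.factorial:ℝ) * (2 * (k:ℝ)^2))) / (n:ℝ) := by
  have hn' : (0:ℝ) < n := by exact_mod_cast hn
  have hTp : (0:ℝ) < #T := by exact_mod_cast hT.card_pos
  set q : Finset β → ℝ := fun S => (#{t ∈ T | S ⊆ E t} : ℝ) / #T with hq
  set B : ℕ → ℝ := fun k => (∑ p ∈ T ×ˢ T, ((#(E p.1 ∩ E p.2)).choose k : ℝ)) / (#T : ℝ)^2 with hB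
  have hcard : ∀ p ∈ T ×ˢ T, #(E p.1 ∩ E p.2) < n := by
    intro p hp
    have := card_le_card (inter_subset_left : E p.1 ∩ E p.2 ⊆ E p.1)
    rw [hE _ (mem_product.1 hp).1] at this
    omega
  have hq0 : ∀ S, 0 ≤ q S := fun S => by positivity
  have hqle : ∀ S, q S ≤ (2/n)^(#S) := by
    intro S
    have := hS S
    have : (n:ℝ)^(#S) * (#{t ∈ T | S ⊆ E t} : ℝ) ≤ 2^(#S) * (#T:ℝ) := by exact_mod_cast this
    simp only [hq]
    rw [div_pow, div_le_div_iff₀ hTp (by positivity)]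
    linarith
  -- sum of q
  have hcount : ∀ k : ℕ, ∀ A ⊆ U, ((#A).choose k : ℝ) = ∑ S ∈ powersetCard k U, if S ⊆ A then 1 else 0 := by
    intro k A hA
    rw [← card_powersetCard, sum_boole]
    congr 2
    ext S; simp only [mem_powersetCard, mem_filter]
    constructor
    · rintro ⟨h1, h2⟩; exact ⟨⟨h1.trans hA, h2⟩, h1⟩
    · rintro ⟨⟨h1, h2⟩, h3⟩; exact ⟨h3, h2⟩
  have hsq : ∀ k, ∑ S ∈ powersetCard k U, q S = ((n-1).choose k : ℝ) := by
    intro k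
    have : ∑ t ∈ T, ((#(E t)).choose k : ℝ) = ∑ S ∈ powersetCard k U, (#{t ∈ T | S ⊆ E t} : ℝ) := by
      rw [sum_congr rfl (fun t ht => hcount k (E t) (hEU t ht)), sum_comm]
      refine sum_congr rfl fun S _ => ?_
      rw [sum_boole]
    simp only [hq]
    rw [← sum_div, ← this, sum_congr rfl (fun t ht => by rw [hE t ht]), sum_const, nsmul_eq_mul]
    field_simp
  have hsB : ∀ k, B k = ∑ S ∈ powersetCard k U, q S ^ 2 := by
    intro k
    simp only [hB, hq, div_pow]
    rw [← sum_div]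
    congr 1
    rw [sum_congr rfl (fun p hp => hcount k (E p.1 ∩ E p.2) (inter_subset_left.trans (hEU _ (mem_product.1 hp).1))), sum_comm]
    refine sum_congr rfl fun S _ => ?_
    rw [sum_boole, sq, ← Nat.cast_mul, ← card_product]
    congr 2
    ext p
    simp only [mem_filter, mem_product, subset_inter_iff]
    tauto
  apply tv_bound _ B n hn
  · intro k hk
    simp only [hB]
    rw [sum_eq_zero, zero_div]
    intro p hp
    rw [Nat.choose_eq_zero_of_lt ((hcard p hp).trans_le hk), Nat.cast_zero]
  · intro j
    simp only [hB, ← mul_div_assoc]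
    rw [← sum_div]
    congr 1
    simp only [mul_sum]
    rw [sum_comm, sum_congr rfl (fun p hp => binom_inv j _ n (hcard p hp)), sum_boole]
  · intro k
    obtain ⟨d0, d1, d2⟩ := desc_lower n hn k
    have hfac : (0:ℝ) < k.factorial := by exact_mod_cast Nat.factorial_pos k
    set x := ((n-1).descFactorial k : ℝ) / (n:ℝ)^k with hx
    have hx2 : (2/(n:ℝ))^k * ((n-1).choose k : ℝ) = 2^k / k.factorial * x := by
      have : ((n-1).descFactorial k : ℝ) = k.factorial * ((n-1).choose k : ℝ) := by
        exact_mod_cast Nat.descFactorial_eq_factorial_mul_choose (n-1) k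
      rw [hx, this, div_pow]; field_simp
    have hpos : (0:ℝ) < 2^k / k.factorial := by positivity
    have up : B k ≤ 2^k / k.factorial := by
      calc B k ≤ ∑ S ∈ powersetCard k U, (2/(n:ℝ))^k * q S := by
            rw [hsB]
            refine sum_le_sum fun S hS' => ?_
            rw [sq]
            have := hqle S
            rw [(mem_powersetCard.1 hS').2] at this
            exact mul_le_mul_of_nonneg_right this (hq0 S)
        _ = 2^k / k.factorial * x := by rw [← mul_sum, hsq, hx2]
        _ ≤ _ := mul_le_of_le_one_right hpos.le d1
    have hUk : ((2/(n:ℝ))^k)^2 * ((#U).choose k : ℝ) ≤ 2^k / k.factorial := by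
      have h1 : ((#U).choose k : ℝ) ≤ (#U:ℝ)^k / k.factorial := Nat.choose_le_pow_div k (#U)
      have h2 : (#U:ℝ) ≤ (n:ℝ)^2/2 := by
        have : (2:ℝ) * #U ≤ (n:ℝ)^2 := by exact_mod_cast hU
        linarith
      calc _ ≤ ((2/(n:ℝ))^k)^2 * (((n:ℝ)^2/2)^k / k.factorial) := by
              gcongr; exact h1.trans (by gcongr)
        _ = _ := by
          rw [← pow_mul, mul_comm k 2, pow_mul, ← mul_div_assoc, ← mul_pow]
          congr 2
          field_simp
    have low : 2 * (2^k / k.factorial * x) - 2^k / k.factorial ≤ B k := by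
      calc _ ≤ 2 * ((2/(n:ℝ))^k * ((n-1).choose k : ℝ)) - ((2/(n:ℝ))^k)^2 * ((#U).choose k : ℝ) := by
            rw [hx2]; linarith
        _ = ∑ S ∈ powersetCard k U, (2 * ((2/(n:ℝ))^k * q S) - ((2/(n:ℝ))^k)^2) := by
            rw [sum_sub_distrib, ← mul_sum, ← mul_sum, hsq, sum_const, card_powersetCard, nsmul_eq_mul]
            ring
        _ ≤ B k := by
            rw [hsB]
            refine sum_le_sum fun S _ => ?_
            nlinarith [sq_nonneg (q S - (2/(n:ℝ))^k)]
    have e : 2^k / (k.factorial:ℝ) * (2 * k^2) / n = 2^k / (k.factorial:ℝ) * (2 * ((k:ℝ)^2/n)) := by ring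
    have : 2^k / (k.factorial:ℝ) * (1 - (k:ℝ)^2/n) ≤ 2^k / k.factorial * x := by gcongr
    have nn : 0 ≤ 2^k / (k.factorial:ℝ) * (2 * ((k:ℝ)^2/n)) := by positivity
    rw [abs_le, e]
    constructor <;> nlinarith

lemma reach_del {V : Type*} {G : SimpleGraph V} {u v w x : V} (h : G.Reachable u w)
    (hv : ¬ G.Reachable u v) : (G.deleteEdges {s(v,x)}).Reachable u w := by
  classical
  obtain ⟨p⟩ := h
  rw [reachable_deleteEdges_iff_exists_walk]
  refine ⟨p, fun hp => hv ?_⟩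
  exact ⟨p.takeUntil v (p.fst_mem_support_of_mem_edges hp)⟩

lemma swap_tree {V : Type*} {T : SimpleGraph V} {u v w : V} (hT : T.IsTree)
    (huv : T.Adj u v) (hw : (T.deleteEdges {s(u,v)}).Reachable u w) :
    (T.deleteEdges {s(u,v)} ⊔ edge v w).IsTree := by
  have hb : ¬ (T.deleteEdges {s(u,v)}).Reachable u v :=
    isBridge_iff.1 (isAcyclic_iff_forall_adj_isBridge.1 hT.isAcyclic huv)
  have hac : (T.deleteEdges {s(u,v)}).IsAcyclic := hT.isAcyclic.anti (deleteEdges_le _)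
  have hvw : ¬ (T.deleteEdges {s(u,v)}).Reachable v w := fun h => hb (hw.trans h.symm)
  have hne : v ≠ w := by rintro rfl; exact hvw (Reachable.refl _)
  have hle : T.deleteEdges {s(u,v)} ≤ T.deleteEdges {s(u,v)} ⊔ edge v w := le_sup_left
  have hvw' : (T.deleteEdges {s(u,v)} ⊔ edge v w).Adj v w := by
    simp [edge_adj, hne]
  have huv' : (T.deleteEdges {s(u,v)} ⊔ edge v w).Reachable u v :=
    (hw.mono hle).trans hvw'.symm.reachable
  refine ⟨?_, hac.sup_edge_of_not_reachable hvw⟩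
  have := hT.connected.nonempty
  refine Connected.mk ?_
  intro a b
  obtain ⟨p⟩ := hT.connected.preconnected a b
  induction p with
  | nil => exact Reachable.refl _
  | @cons a c b hac' p ih =>
    refine Reachable.trans ?_ ih
    by_cases h : s(a,c) = s(u,v)
    · rcases Sym2.eq_iff.1 h with ⟨rfl, rfl⟩ | ⟨rfl, rfl⟩
      · exact huv'
      · exact huv'.symm
    · exact (hle (by rw [deleteEdges_adj]; exact ⟨hac', h⟩ : (T.deleteEdges {s(u,v)}).Adj a c)).reachable

/-- the two cases of an edge deletion of a tree -/
lemma split_tree {V : Type*} {T : SimpleGraph V} {u v : V} (hT : T.IsTree) (w : V) :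
    (T.deleteEdges {s(u,v)}).Reachable u w ∨ (T.deleteEdges {s(u,v)}).Reachable v w := by
  obtain ⟨p⟩ := hT.connected.preconnected w u
  suffices ∀ a b (p : T.Walk a b), (b = u) → 
    (T.deleteEdges {s(u,v)}).Reachable u a ∨ (T.deleteEdges {s(u,v)}).Reachable v a from this w u p rfl
  intro a b p
  induction p with
  | nil => rintro rfl; exact Or.inl (Reachable.refl _)
  | @cons a c b hac p ih =>
    intro hb
    by_cases h : s(a,c) = s(u,v)
    · rcases Sym2.eq_iff.1 h with ⟨rfl, rfl⟩ | ⟨rfl, rfl⟩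
      · exact Or.inl (Reachable.refl _)
      · exact Or.inr (Reachable.refl _)
    · have : (T.deleteEdges {s(u,v)}).Adj c a := by
        rw [deleteEdges_adj]; exact ⟨hac.symm, fun h' => h (Sym2.eq_swap.trans h')⟩
      exact (ih hb).imp (fun h => h.trans this.reachable) (fun h => h.trans this.reachable)

lemma swap_eq_w {V : Type*} {G G' : SimpleGraph V} {u v w w' : V} 
    (hb : ¬ G.Reachable u v) (hb' : ¬ G'.Reachable u v) (hw : G.Reachable u w) (_hw' : G'.Reachable u w')
    (h : G ⊔ edge v w = G' ⊔ edge v w') : w = w' := by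
  by_contra hne
  have hvw : v ≠ w := by rintro rfl; exact hb hw
  have h1 : (G' ⊔ edge v w').Adj v w := by rw [← h]; simp [edge_adj, hvw]
  have h2 : G'.Adj v w := by
    rcases h1 with h1 | h1
    · exact h1
    · rw [edge_adj] at h1; grind
  have h3 := reach_del (x := w') hw hb
  have hle : G.deleteEdges {s(v,w')} ≤ G' := by
    intro a b hab
    rw [deleteEdges_adj] at hab
    have : (G' ⊔ edge v w').Adj a b := by rw [← h]; exact Or.inl hab.1
    rcases this with h4 | h4
    · exact h4
    · rw [edge_adj] at h4
      exact absurd (by simp only [Set.mem_singleton_iff]; grind) hab.2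
  exact hb' ((h3.mono hle).trans h2.symm.reachable)

lemma swap_inj {V : Type*} {T T' : SimpleGraph V} {u v w w' : V} (hT : T.IsTree) (hT' : T'.IsTree)
    (huv : T.Adj u v) (huv' : T'.Adj u v)
    (hw : (T.deleteEdges {s(u,v)}).Reachable u w) (hw' : (T'.deleteEdges {s(u,v)}).Reachable u w')
    (h : T.deleteEdges {s(u,v)} ⊔ edge v w = T'.deleteEdges {s(u,v)} ⊔ edge v w') :
    T = T' ∧ w = w' := by
  have hb : ¬ (T.deleteEdges {s(u,v)}).Reachable u v :=
    isBridge_iff.1 (isAcyclic_iff_forall_adj_isBridge.1 hT.isAcyclic huv)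
  have hb' : ¬ (T'.deleteEdges {s(u,v)}).Reachable u v :=
    isBridge_iff.1 (isAcyclic_iff_forall_adj_isBridge.1 hT'.isAcyclic huv')
  have e := swap_eq_w hb hb' hw hw' h
  subst e
  refine ⟨?_, rfl⟩
  have n1 : ¬ (T.deleteEdges {s(u,v)}).Adj v w := fun h => hb (hw.trans h.symm.reachable)
  have n2 : ¬ (T'.deleteEdges {s(u,v)}).Adj v w := fun h => hb' (hw'.trans h.symm.reachable)
  have e0 : T.deleteEdges {s(u,v)} = T'.deleteEdges {s(u,v)} := by
    ext a b
    have : (T.deleteEdges {s(u,v)} ⊔ edge v w).Adj a b ↔ (T'.deleteEdges {s(u,v)} ⊔ edge v w).Adj a b := by rw [h]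
    rw [sup_adj, sup_adj, edge_adj] at this
    have n1' : ¬ (T.deleteEdges {s(u,v)}).Adj w v := fun h => n1 h.symm
    have n2' : ¬ (T'.deleteEdges {s(u,v)}).Adj w v := fun h => n2 h.symm
    grind
  ext a b
  have : (T.deleteEdges {s(u,v)}).Adj a b ↔ (T'.deleteEdges {s(u,v)}).Adj a b := by rw [e0]
  rw [deleteEdges_adj, deleteEdges_adj] at this
  by_cases hh : s(a,b) = s(u,v)
  · have h1 : s(a,b) ∈ T.edgeSet := by rw [hh]; exact huv
    have h2 : s(a,b) ∈ T'.edgeSet := by rw [hh]; exact huv'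
    exact ⟨fun _ => h2, fun _ => h1⟩
  · simpa [hh] using this

open Classical in
noncomputable def treesCont (n : ℕ) (S : Finset (Sym2 (Fin n))) : Finset (SimpleGraph (Fin n)) :=
  Finset.univ.filter fun T => T.IsTree ∧ (S : Set (Sym2 (Fin n))) ⊆ T.edgeSet

lemma mem_treesCont {n : ℕ} {S : Finset (Sym2 (Fin n))} {T : SimpleGraph (Fin n)} :
    T ∈ treesCont n S ↔ T.IsTree ∧ (S : Set (Sym2 (Fin n))) ⊆ T.edgeSet := by
  classical
  simp [treesCont]

open Classical in
lemma half_bound (n : ℕ) (S : Finset (Sym2 (Fin n))) (u v : Fin n) (he : s(u,v) ∉ S) :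
    ((treesCont n (insert s(u,v) S) ×ˢ (Finset.univ : Finset (Fin n))).filter
      (fun p => (p.1.deleteEdges {s(u,v)}).Reachable u p.2)).card ≤ (treesCont n S).card := by
  apply Finset.card_le_card_of_injOn (fun p => p.1.deleteEdges {s(u,v)} ⊔ edge v p.2)
  · rintro ⟨T, w⟩ hp
    simp only [Finset.coe_filter, Finset.mem_product, Finset.mem_univ, and_true, Set.mem_ofPred_eq, mem_treesCont] at hp
    obtain ⟨⟨hT, hS⟩, hw⟩ := hp
    have huv : T.Adj u v := hS (show s(u,v) ∈ _ by simp)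
    simp only [Finset.mem_coe, mem_treesCont]
    refine ⟨swap_tree hT huv hw, ?_⟩
    intro f hf
    rw [edgeSet_sup, edgeSet_deleteEdges]
    refine Or.inl ⟨hS (by simp at hf ⊢; exact Or.inr hf), ?_⟩
    rintro rfl
    exact he hf
  · rintro ⟨T, w⟩ hp ⟨T', w'⟩ hp' h
    simp only [Finset.coe_filter, Finset.mem_product, Finset.mem_univ, and_true, Set.mem_ofPred_eq, mem_treesCont] at hp hp'
    obtain ⟨⟨hT, hS⟩, hw⟩ := hp
    obtain ⟨⟨hT', hS'⟩, hw'⟩ := hp'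
    have := swap_inj hT hT' (hS (show s(u,v) ∈ _ by simp)) (hS' (show s(u,v) ∈ _ by simp)) hw hw' h
    rw [this.1, this.2]

open Classical in
lemma step_bound (n : ℕ) (S : Finset (Sym2 (Fin n))) (e : Sym2 (Fin n)) (he : e ∉ S) :
    n * (treesCont n (insert e S)).card ≤ 2 * (treesCont n S).card := by
  induction e with | h u v => 
  have h1 := half_bound n S u v he
  have h2 := half_bound n S v u (by rwa [Sym2.eq_swap])
  rw [Sym2.eq_swap (a := v)] at h2
  have h3 : (treesCont n (insert s(u,v) S) ×ˢ (Finset.univ : Finset (Fin n))) ⊆ 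
    ((treesCont n (insert s(u,v) S) ×ˢ (Finset.univ : Finset (Fin n))).filter
      (fun p => (p.1.deleteEdges {s(u,v)}).Reachable u p.2)) ∪ ((treesCont n (insert s(u,v) S) ×ˢ (Finset.univ : Finset (Fin n))).filter
      (fun p => (p.1.deleteEdges {s(u,v)}).Reachable v p.2)) := by
    rintro ⟨T, w⟩ hp
    have hT : T.IsTree := (mem_treesCont.1 (Finset.mem_product.1 hp).1).1
    rw [← Finset.filter_or, Finset.mem_filter]
    exact ⟨hp, split_tree hT w⟩
  have h4 := (Finset.card_le_card h3).trans (Finset.card_union_le _ _)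
  rw [Finset.card_product, Finset.card_univ, Fintype.card_fin] at h4
  linarith [mul_comm n (treesCont n (insert s(u,v) S)).card]

open Classical in
lemma all_bound (n : ℕ) (S : Finset (Sym2 (Fin n))) :
    n ^ S.card * (treesCont n S).card ≤ 2 ^ S.card * (treesCont n ∅).card := by
  induction S using Finset.induction_on with
  | empty => simp
  | insert e S he ih =>
    rw [Finset.card_insert_of_notMem he, pow_succ, pow_succ]
    have := step_bound n S e he
    calc _ = n^S.card * (n * (treesCont n (insert e S)).card) := by ring
      _ ≤ n^S.card * (2 * (treesCont n S).card) := by gcongr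
      _ = 2 * (n^S.card * (treesCont n S).card) := by ring
      _ ≤ 2 * (2 ^ S.card * (treesCont n ∅).card) := by gcongr
      _ = _ := by ring

/-- If `W` is the number of edges shared by two independent uniformly random
spanning trees of `K_n`, then the total variation distance between the law of
`W` and the Poisson distribution with mean `2` is `O(1/n)`. -/
theorem tv_dist_shared_edges_poisson :
    ∃ C : ℝ, 0 < C ∧ ∀ n : ℕ, 1 ≤ n →
      (1 / 2) * ∑' j : ℕ,
          |sharedEdgesPMF n j - Real.exp (-2) * 2 ^ j / (Nat.factorial j)|
        ≤ C / n := by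
  classical
  set K : ℝ := ∑' k : ℕ, (2:ℝ)^k * (2^k / (k.factorial:ℝ) * (2 * (k:ℝ)^2)) with hK
  have hK0 : 0 ≤ K := tsum_nonneg fun k => by positivity
  refine ⟨K + 1, by linarith, fun n hn => ?_⟩
  have hn' : (0:ℝ) < n := by exact_mod_cast hn
  have : Nonempty (Fin n) := ⟨⟨0, hn⟩⟩
  have main := abstract_main (treesCont n ∅) (fun T => T.edgeFinset)
    ((⊤ : SimpleGraph (Fin n)).edgeFinset) n hn ?_ ?_ ?_ ?_ ?_
  · have hP : ∀ j, sharedEdgesPMF n j =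
      (((treesCont n ∅ ×ˢ treesCont n ∅).filter
        (fun p => (p.1.edgeFinset ∩ p.2.edgeFinset).card = j)).card : ℝ) / ((treesCont n ∅).card : ℝ)^2 := by
      intro j
      unfold sharedEdgesPMF
      congr 2
      · rw [Nat.card_eq_fintype_card, Fintype.card_subtype]
        congr 1
        ext p
        simp only [Finset.mem_filter, Finset.mem_univ, true_and, Finset.mem_product, mem_treesCont,
          Finset.coe_empty, Set.empty_subset, and_true]
        have : Nat.card (p.1.edgeSet ∩ p.2.edgeSet : Set (Sym2 (Fin n))) = (p.1.edgeFinset ∩ p.2.edgeFinset).card := by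
          rw [Nat.card_coe_set_eq, ← Set.ncard_coe_finset]
          simp
        rw [this, and_assoc]
      · rw [Nat.card_eq_fintype_card, Fintype.card_subtype]
        congr 2
        ext p
        simp [mem_treesCont]
    simp only [hP]
    rw [← hK] at main
    have h1 : K / n ≤ (K+1)/n := by gcongr; linarith
    have h2 : 0 ≤ K / n := by positivity
    linarith
  · obtain ⟨T, _, hT⟩ := (connected_top : (⊤ : SimpleGraph (Fin n)).Connected).exists_isTree_le
    exact ⟨T, mem_treesCont.2 ⟨hT, by simp⟩⟩
  · intro T _
    exact edgeFinset_mono le_top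
  · rw [card_edgeFinset_top_eq_card_choose_two, Fintype.card_fin, Nat.choose_two_right]
    have := Nat.mul_div_le (n*(n-1)) 2
    nlinarith [Nat.sub_le n 1]
  · intro T hT
    have := (mem_treesCont.1 hT).1.card_edgeFinset
    rw [Fintype.card_fin] at this
    omega
  · intro S
    have := all_bound n S
    convert this using 3
    ext T
    simp only [Finset.mem_filter, mem_treesCont, Finset.coe_empty, Set.empty_subset, and_true]
    rw [← Finset.coe_subset, coe_edgeFinset]
end

section
/- Let π, π' be two independent uniformly random Hamiltonian cycles on K_n. Then the number of common edges |E(π) ∩ E(π')| converges in distribution to Poisson(2) as n → ∞. -/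
open SimpleGraph Filter

/-- A Hamiltonian cycle of `K_n`, viewed as a subgraph: a connected
2-regular graph on the vertex set `Fin n`. -/
def IsHamCycleGraph (n : ℕ) (H : SimpleGraph (Fin n)) : Prop :=
  H.Connected ∧ ∀ v : Fin n, Nat.card (H.neighborSet v) = 2

namespace HamPoisson
open Finset Classical

variable {V : Type*} [Fintype V] [DecidableEq V]

/-- number of ordered common adjacent pairs -/
noncomputable def Yc (G H : SimpleGraph V) (σ : Equiv.Perm V) : ℕ :=
  #{p : V × V | G.Adj p.1 p.2 ∧ H.Adj (σ p.1) (σ p.2)}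

/-- the number of permutations in `D` with `R (σ v) (σ w)` -/
lemma key_bound (D : Finset (Equiv.Perm V)) (R : V → V → Prop) [DecidableRel R] (d : ℕ)
    (hR : ∀ a, #{c | R a c} ≤ d) (v w : V) (hvw : v ≠ w) (Z : Finset V) (hvZ : v ∉ Z)
    (hD : ∀ σ ∈ D, ∀ z ∈ Z, σ * Equiv.swap w z ∈ D) :
    #{σ ∈ D | R (σ v) (σ w)} * #Z ≤ d * #D := by
  have h2 : #(D.sigma fun τ => ({c | R (τ v) c} : Finset V)) ≤ d * #D := by
    rw [Finset.card_sigma, mul_comm]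
    exact Finset.sum_le_card_nsmul _ _ _ (fun τ _ => hR _)
  refine le_trans ?_ h2
  rw [← Finset.card_product]
  apply Finset.card_le_card_of_injOn (fun p => ⟨p.1 * Equiv.swap w p.2, p.1 w⟩)
  · rintro ⟨σ, z⟩ h
    simp only [coe_product, Set.mem_prod, mem_coe, mem_filter] at h
    obtain ⟨⟨h1, h3⟩, h4⟩ := h
    have hz : v ≠ z := fun h => hvZ (h ▸ h4)
    refine mem_coe.2 (mem_sigma.2 ⟨hD σ h1 z h4, mem_filter.2 ⟨mem_univ _, ?_⟩⟩)
    show R (σ (Equiv.swap w z v)) (σ w)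
    rw [Equiv.swap_apply_of_ne_of_ne hvw hz]
    exact h3
  · rintro ⟨σ, z⟩ h ⟨σ', z'⟩ h' he
    simp only [Sigma.mk.injEq, heq_eq_eq] at he
    obtain ⟨he1, he2⟩ := he
    have hz : z = z' := by
      have e1 : (σ * Equiv.swap w z) z = σ w := by simp
      have e2 : (σ' * Equiv.swap w z') z' = σ' w := by simp
      rw [he1, he2, ← e2] at e1
      exact (Equiv.injective _) e1
    subst hz
    have := mul_right_cancel he1
    simp [this]

/-- Good situation -/
def Good (G H : SimpleGraph V) (i i' : V) (σ : Equiv.Perm V) : Prop :=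
  (∀ y, G.Adj i' y → ¬ H.Adj (σ i') (σ y)) ∧
  (∀ y, G.Adj i' y → ¬ H.Adj (σ i) (σ y)) ∧
  (∀ y, G.Adj i y → ¬ H.Adj (σ i) (σ y)) ∧
  (∀ y, G.Adj i' y → y ≠ i → ¬ ∃ b, H.Adj (σ i) b ∧ H.Adj b (σ y)) ∧
  (∀ q y, G.Adj q y → y ≠ i → H.Adj (σ i) (σ q) → ¬ H.Adj (σ q) (σ y)) ∧
  (∀ q y, G.Adj q y → q ≠ i' → y ≠ i' → y ≠ i → H.Adj (σ i) (σ q) → ¬ H.Adj (σ i') (σ y))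

lemma good_step (G H : SimpleGraph V) (i i' : V) (hG : G.Adj i i') (σ : Equiv.Perm V)
    (hg : Good G H i i' σ) (b : V) (hb : H.Adj (σ i) b) :
    Yc G H (Equiv.swap b (σ i') * σ) = Yc G H σ + 2 := by
  obtain ⟨g2, g6, g7, g4, g3, g5⟩ := hg
  obtain ⟨q, rfl⟩ := σ.surjective b
  have hii' : i ≠ i' := hG.ne
  have hqi' : q ≠ i' := by
    rintro rfl
    exact g7 _ hG hb
  have hqi : q ≠ i := by
    rintro rfl
    exact hb.ne rfl
  have s1 : (Equiv.swap (σ q) (σ i') * σ) i' = σ q := by simp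
  have s2 : (Equiv.swap (σ q) (σ i') * σ) q = σ i' := by simp
  have s3 : ∀ y, y ≠ q → y ≠ i' → (Equiv.swap (σ q) (σ i') * σ) y = σ y := by
    intro y h1 h2
    simp only [Equiv.Perm.mul_apply]
    exact Equiv.swap_apply_of_ne_of_ne (fun h => h1 (σ.injective h)) (fun h => h2 (σ.injective h))
  generalize Equiv.swap (σ q) (σ i') * σ = τ at s1 s2 s3
  have hiq : ¬ G.Adj i q := fun h => g7 _ h hb
  have hi'q : ¬ G.Adj i' q := fun h => g6 _ h hb
  have ti : τ i = σ i := s3 i hqi.symm hii'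
  have c1 : ∀ y, G.Adj i' y → y ≠ i → ¬ H.Adj (τ i') (τ y) := by
    intro y h1 h2
    rw [s1, s3 y (by rintro rfl; exact hi'q h1) h1.ne']
    exact fun h => g4 y h1 h2 ⟨_, hb, h⟩
  have c2 : ∀ y, G.Adj q y → ¬ H.Adj (τ q) (τ y) := by
    intro y h1
    have hy : y ≠ i' := by rintro rfl; exact hi'q h1.symm
    rw [s2, s3 y h1.ne' hy]
    exact g5 q y h1 hqi' hy (by rintro rfl; exact hiq h1.symm) hb
  have c3 : ∀ y, G.Adj q y → ¬ H.Adj (σ q) (σ y) := by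
    intro y h1
    exact g3 q y h1 (by rintro rfl; exact hiq h1.symm) hb
  have key : ∀ x y, (G.Adj x y ∧ H.Adj (τ x) (τ y)) ↔
      (G.Adj x y ∧ H.Adj (σ x) (σ y)) ∨ ((x = i ∧ y = i') ∨ (x = i' ∧ y = i)) := by
    intro x y
    by_cases hx : x = i'
    · subst hx
      by_cases hy : y = i
      · subst hy
        simp [hG.symm, s1, ti, hb.symm]
      · constructor
        · rintro ⟨h1, h2⟩
          exact absurd h2 (c1 y h1 hy)
        · rintro (⟨h1, h2⟩ | ⟨h1, h2⟩ | ⟨h1, h2⟩)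
          · exact absurd h2 (g2 y h1)
          · exact absurd h1.symm hii'
          · exact absurd h2 hy
    by_cases hy : y = i'
    · subst hy
      by_cases hx : x = i
      · subst hx
        simp [hG, s1, ti, hb]
      · constructor
        · rintro ⟨h1, h2⟩
          exact absurd h2.symm (c1 x h1.symm hx)
        · rintro (⟨h1, h2⟩ | ⟨h1, h2⟩ | ⟨h1, h2⟩)
          · exact absurd h2.symm (g2 x h1.symm)
          · exact absurd h1 hx
          · exact absurd h2.symm hii'
    have hn : ¬ ((x = i ∧ y = i') ∨ (x = i' ∧ y = i)) := by tauto
    by_cases hxq : x = q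
    · subst hxq
      have := c2 y
      have := c3 y
      tauto
    by_cases hyq : y = q
    · subst hyq
      have := c2 x
      have := c3 x
      have := G.adj_comm x y
      have := H.adj_comm (τ x) (τ y)
      have := H.adj_comm (σ x) (σ y)
      tauto
    rw [s3 x hxq hx, s3 y hyq hy]
    tauto
  have hset : ({p : V × V | G.Adj p.1 p.2 ∧ H.Adj (τ p.1) (τ p.2)} : Finset (V × V)) =
      ({p : V × V | G.Adj p.1 p.2 ∧ H.Adj (σ p.1) (σ p.2)} : Finset (V × V)) ∪
        {(i, i'), (i', i)} := by
    ext ⟨x, y⟩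
    simp only [mem_filter, mem_univ, true_and, mem_union, mem_insert, mem_singleton, Prod.mk.injEq]
    exact key x y
  unfold Yc
  rw [hset, card_union_of_disjoint, card_pair]
  · intro h
    exact hii' (Prod.mk.inj h).1
  · rw [Finset.disjoint_left]
    rintro ⟨x, y⟩ h1 h2
    simp only [mem_filter, mem_univ, true_and, mem_insert, mem_singleton, Prod.mk.injEq] at h1 h2
    rcases h2 with ⟨rfl, rfl⟩ | ⟨rfl, rfl⟩
    · exact g7 _ hG h1.2
    · exact g2 _ hG.symm h1.2

/-- the exact (n-1)-to-1 identity -/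
lemma fibre_count (H : SimpleGraph V) (i i' : V) (hii' : i ≠ i') (P : Equiv.Perm V → Prop)
    [DecidablePred P] :
    #((univ : Finset (Equiv.Perm V × V)).filter fun p => H.Adj (p.1 i) p.2 ∧
        P (Equiv.swap p.2 (p.1 i') * p.1)) =
      #{σ : Equiv.Perm V | H.Adj (σ i) (σ i') ∧ P σ} * (Fintype.card V - 1) := by
  have : ∀ a : V, #({a}ᶜ : Finset V) = Fintype.card V - 1 := fun a => by
    rw [card_compl, card_singleton]
  have h2 : #(({σ : Equiv.Perm V | H.Adj (σ i) (σ i') ∧ P σ} : Finset _).sigma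
      fun σ => ({σ i}ᶜ : Finset V)) =
      #{σ : Equiv.Perm V | H.Adj (σ i) (σ i') ∧ P σ} * (Fintype.card V - 1) := by
    rw [card_sigma]
    simp [this]
  rw [← h2]
  refine Finset.card_bij' (fun p _ => ⟨Equiv.swap p.2 (p.1 i') * p.1, p.1 i'⟩)
    (fun s _ => (Equiv.swap (s.1 i') s.2 * s.1, s.1 i')) ?_ ?_ ?_ ?_
  · rintro ⟨σ, b⟩ h
    simp only [mem_filter, mem_univ, true_and] at h
    have e : Equiv.swap b (σ i') (σ i) = σ i :=
      Equiv.swap_apply_of_ne_of_ne h.1.ne (fun h => hii' (σ.injective h))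
    simp only [mem_sigma, mem_filter, mem_univ, true_and, mem_compl, mem_singleton,
      Equiv.Perm.mul_apply, e, Equiv.swap_apply_right]
    exact ⟨h, fun h => hii' (σ.injective h.symm)⟩
  · rintro ⟨σ, c⟩ h
    simp only [mem_sigma, mem_filter, mem_univ, true_and, mem_compl, mem_singleton] at h
    have e : Equiv.swap (σ i') c (σ i) = σ i :=
      Equiv.swap_apply_of_ne_of_ne h.1.1.ne (fun h' => h.2 h'.symm)
    simp only [mem_filter, mem_univ, true_and, Equiv.Perm.mul_apply, e, Equiv.swap_apply_left]
    refine ⟨h.1.1, ?_⟩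
    rw [← mul_assoc, Equiv.swap_mul_self, one_mul]
    exact h.1.2
  · rintro ⟨σ, b⟩ h
    simp [← mul_assoc]
  · rintro ⟨σ, b⟩ h
    simp [← mul_assoc]

end HamPoisson

namespace HamPoisson
open Finset Classical

variable {V : Type*} [Fintype V] [DecidableEq V]

lemma card_biUnion_le_real {α β : Type*} [DecidableEq β] (s : Finset α) (f : α → Finset β) (c : ℝ)
    (h : ∀ a ∈ s, (#(f a) : ℝ) ≤ c) : (#(s.biUnion f) : ℝ) ≤ #s * c := by
  calc (#(s.biUnion f) : ℝ) ≤ ((∑ a ∈ s, #(f a) : ℕ) : ℝ) := by exact_mod_cast card_biUnion_le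
    _ = ∑ a ∈ s, (#(f a) : ℝ) := by push_cast; rfl
    _ ≤ #s * c := by
      rw [← nsmul_eq_mul]
      exact sum_le_card_nsmul _ _ _ h

lemma pair_bound (R : V → V → Prop) [DecidableRel R] (d : ℕ) (hn : 2 ≤ Fintype.card V)
    (hR : ∀ a, #{c | R a c} ≤ d) (v w : V) (hvw : v ≠ w) :
    (#{σ : Equiv.Perm V | R (σ v) (σ w)} : ℝ) ≤
      d * (Fintype.card V).factorial / (Fintype.card V - 1) := by
  have h := key_bound univ R d hR v w hvw {v}ᶜ (by simp) (by simp)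
  rw [card_compl, card_singleton, card_univ, Fintype.card_perm] at h
  have h' : (#{σ : Equiv.Perm V | R (σ v) (σ w)} : ℝ) * ((Fintype.card V - 1 : ℕ) : ℝ) ≤
      d * (Fintype.card V).factorial := by exact_mod_cast h
  rw [Nat.cast_sub (by omega)] at h'
  have : (2 : ℝ) ≤ Fintype.card V := by exact_mod_cast hn
  rw [le_div_iff₀ (by linarith)]
  simpa using h'

lemma two_bound (H : SimpleGraph V) (hn : 6 ≤ Fintype.card V)
    (hH : ∀ a, #{c | H.Adj a c} ≤ 2) (i v q y : V) (hiq : i ≠ q) (hvy : v ≠ y) (hyi : y ≠ i)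
    (hyq : y ≠ q) :
    (#{σ : Equiv.Perm V | H.Adj (σ i) (σ q) ∧ H.Adj (σ v) (σ y)} : ℝ) ≤
      4 * (Fintype.card V).factorial / ((Fintype.card V - 1) * (Fintype.card V - 3)) := by
  have h1 := pair_bound H.Adj 2 (by omega) hH i q hiq
  have h := key_bound {σ : Equiv.Perm V | H.Adj (σ i) (σ q)} H.Adj 2 hH v y hvy ({v, i, q}ᶜ)
    (by simp) (by
      intro σ hσ z hz
      simp only [mem_compl, mem_insert, mem_singleton, not_or] at hz
      simp only [mem_filter, mem_univ, true_and, Equiv.Perm.mul_apply] at hσ ⊢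
      rw [Equiv.swap_apply_of_ne_of_ne hyi.symm (Ne.symm hz.2.1),
        Equiv.swap_apply_of_ne_of_ne hyq.symm (Ne.symm hz.2.2)]
      exact hσ)
  rw [filter_filter] at h
  have h3 : Fintype.card V - 3 ≤ #({v, i, q}ᶜ : Finset V) := by
    rw [card_compl]
    have := card_le_three (a := v) (b := i) (c := q)
    omega
  have h4 := (Nat.mul_le_mul_left _ h3).trans h
  have h' : (#{σ : Equiv.Perm V | H.Adj (σ i) (σ q) ∧ H.Adj (σ v) (σ y)} : ℝ) *
      ((Fintype.card V - 3 : ℕ) : ℝ) ≤ 2 * #{σ : Equiv.Perm V | H.Adj (σ i) (σ q)} := by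
    exact_mod_cast h4
  rw [Nat.cast_sub (by omega)] at h'
  have h6 : (6 : ℝ) ≤ Fintype.card V := by exact_mod_cast hn
  rw [← div_div, le_div_iff₀ (by linarith)]
  push_cast at h' h1
  refine h'.trans ?_
  calc _ ≤ 2 * (2 * ((Fintype.card V).factorial : ℝ) / (Fintype.card V - 1)) := by linarith
    _ = _ := by ring

lemma darts_card (G : SimpleGraph V) (hG : ∀ a, #{c | G.Adj a c} = 2) :
    #{p : V × V | G.Adj p.1 p.2} = 2 * Fintype.card V := by
  have : #{p : V × V | G.Adj p.1 p.2} = ∑ a : V, #{c | G.Adj a c} := by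
    rw [← card_sigma]
    refine Finset.card_bij' (fun p _ => ⟨p.1, p.2⟩) (fun s _ => (s.1, s.2)) ?_ ?_ ?_ ?_ <;> simp
  rw [this]
  simp [hG, mul_comm]

lemma bad_bound (G H : SimpleGraph V) (hn : 6 ≤ Fintype.card V)
    (hG : ∀ a, #{c | G.Adj a c} = 2) (hH : ∀ a, #{c | H.Adj a c} = 2)
    (i i' : V) (hii : G.Adj i i') :
    (#{σ : Equiv.Perm V | ¬ Good G H i i' σ} : ℝ) ≤
      52 * (Fintype.card V).factorial / (Fintype.card V - 1) := by
  set N : ℝ := (Fintype.card V : ℝ) with hN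
  set F : ℝ := ((Fintype.card V).factorial : ℝ) with hF
  have hH' : ∀ a, #{c | H.Adj a c} ≤ 2 := fun a => (hH a).le
  have h6 : (6 : ℝ) ≤ N := by rw [hN]; exact_mod_cast hn
  have hF0 : 0 < F := by rw [hF]; exact_mod_cast Nat.factorial_pos _
  have hHH : ∀ a, #{c | ∃ b, H.Adj a b ∧ H.Adj b c} ≤ 4 := by
    intro a
    have : ({c | ∃ b, H.Adj a b ∧ H.Adj b c} : Finset V) ⊆
        ({b | H.Adj a b} : Finset V).biUnion fun b => {c | H.Adj b c} := by
      intro c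
      simp
    refine (card_le_card this).trans ((card_biUnion_le_card_mul _ _ 2 fun b _ => hH' b).trans ?_)
    rw [hH]
  let E2 : Finset (Equiv.Perm V) := ({y | G.Adj i' y} : Finset V).biUnion
    fun y => {σ | H.Adj (σ i') (σ y)}
  let E6 : Finset (Equiv.Perm V) := ({y | G.Adj i' y} : Finset V).biUnion
    fun y => {σ | H.Adj (σ i) (σ y)}
  let E7 : Finset (Equiv.Perm V) := ({y | G.Adj i y} : Finset V).biUnion
    fun y => {σ | H.Adj (σ i) (σ y)}
  let E4 : Finset (Equiv.Perm V) := ({y | G.Adj i' y} : Finset V).biUnion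
    fun y => {σ | y ≠ i ∧ ∃ b, H.Adj (σ i) b ∧ H.Adj b (σ y)}
  let E3 : Finset (Equiv.Perm V) := ({p | G.Adj p.1 p.2} : Finset (V × V)).biUnion
    fun p => {σ | p.2 ≠ i ∧ H.Adj (σ i) (σ p.1) ∧ H.Adj (σ p.1) (σ p.2)}
  let E5 : Finset (Equiv.Perm V) := ({p | G.Adj p.1 p.2} : Finset (V × V)).biUnion
    fun p => {σ | (p.1 ≠ i' ∧ p.2 ≠ i' ∧ p.2 ≠ i) ∧ H.Adj (σ i) (σ p.1) ∧ H.Adj (σ i') (σ p.2)}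
  have hsub : ({σ : Equiv.Perm V | ¬ Good G H i i' σ} : Finset _) ⊆
      E2 ∪ E6 ∪ E7 ∪ E4 ∪ E3 ∪ E5 := by
    intro σ hσ
    by_contra hcon
    simp only [mem_union, not_or, E2, E6, E7, E4, E3, E5, mem_biUnion, mem_filter, mem_univ,
      true_and, not_exists, not_and, Prod.forall] at hcon hσ
    obtain ⟨⟨⟨⟨⟨a2, a6⟩, a7⟩, a4⟩, a3⟩, a5⟩ := hcon
    apply hσ
    refine ⟨a2, a6, a7, ?_, a3, ?_⟩
    · rintro y h1 h2 ⟨b, h3, h4⟩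
      exact a4 y h1 h2 b h3 h4
    · intro q y h1 h2 h3 h4
      exact a5 q y h1 ⟨h2, h3, h4⟩
  have b2 : (#E2 : ℝ) ≤ 2 * (2 * F / (N - 1)) := by
    have := card_biUnion_le_real ({y | G.Adj i' y} : Finset V)
      (fun y => ({σ | H.Adj (σ i') (σ y)} : Finset (Equiv.Perm V))) (2 * F / (N - 1)) (by
        intro y hy
        have hy' : G.Adj i' y := by simpa using hy
        simpa using pair_bound H.Adj 2 (by omega) hH' i' y hy'.ne)
    rw [hG] at this
    exact_mod_cast this
  have b7 : (#E7 : ℝ) ≤ 2 * (2 * F / (N - 1)) := by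
    have := card_biUnion_le_real ({y | G.Adj i y} : Finset V)
      (fun y => ({σ | H.Adj (σ i) (σ y)} : Finset (Equiv.Perm V))) (2 * F / (N - 1)) (by
        intro y hy
        have hy' : G.Adj i y := by simpa using hy
        simpa using pair_bound H.Adj 2 (by omega) hH' i y hy'.ne)
    rw [hG] at this
    exact_mod_cast this
  have pos1 : 0 ≤ 2 * F / (N - 1) := div_nonneg (by linarith) (by linarith)
  have pos2 : 0 ≤ 4 * F / (N - 1) := div_nonneg (by linarith) (by linarith)
  have pos3 : 0 ≤ 4 * F / ((N - 1) * (N - 3)) :=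
    div_nonneg (by linarith) (mul_nonneg (by linarith) (by linarith))
  have b6 : (#E6 : ℝ) ≤ 2 * (2 * F / (N - 1)) := by
    have := card_biUnion_le_real ({y | G.Adj i' y} : Finset V)
      (fun y => ({σ | H.Adj (σ i) (σ y)} : Finset (Equiv.Perm V))) (2 * F / (N - 1)) (by
        intro y hy
        by_cases hyi : i = y
        · subst hyi
          simpa using pos1
        · simpa using pair_bound H.Adj 2 (by omega) hH' i y hyi)
    rw [hG] at this
    exact_mod_cast this
  have b4 : (#E4 : ℝ) ≤ 2 * (4 * F / (N - 1)) := by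
    have := card_biUnion_le_real ({y | G.Adj i' y} : Finset V)
      (fun y => ({σ | y ≠ i ∧ ∃ b, H.Adj (σ i) b ∧ H.Adj b (σ y)} : Finset (Equiv.Perm V)))
      (4 * F / (N - 1)) (by
        intro y hy
        by_cases hyi : i = y
        · subst hyi
          simpa using pos2
        · have := pair_bound (fun a c => ∃ b, H.Adj a b ∧ H.Adj b c) 4 (by omega) hHH i y hyi
          simpa [Ne.symm hyi] using this)
    rw [hG] at this
    exact_mod_cast this
  have b3 : (#E3 : ℝ) ≤ (2 * N) * (4 * F / ((N - 1) * (N - 3))) := by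
    have := card_biUnion_le_real ({p | G.Adj p.1 p.2} : Finset (V × V))
      (fun p => ({σ | p.2 ≠ i ∧ H.Adj (σ i) (σ p.1) ∧ H.Adj (σ p.1) (σ p.2)} :
        Finset (Equiv.Perm V)))
      (4 * F / ((N - 1) * (N - 3))) (by
        rintro ⟨q, y⟩ hy
        have hy' : G.Adj q y := by simpa using hy
        by_cases hyi : y = i
        · subst hyi
          simpa using pos3
        by_cases hqi : i = q
        · subst hqi
          simpa using pos3
        · have := two_bound H hn hH' i q q y hqi hy'.ne hyi hy'.ne'
          simpa [hyi] using this)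
    rw [darts_card G hG] at this
    push_cast at this
    exact this
  have b5 : (#E5 : ℝ) ≤ (2 * N) * (4 * F / ((N - 1) * (N - 3))) := by
    have := card_biUnion_le_real ({p | G.Adj p.1 p.2} : Finset (V × V))
      (fun p => ({σ | (p.1 ≠ i' ∧ p.2 ≠ i' ∧ p.2 ≠ i) ∧ H.Adj (σ i) (σ p.1) ∧
        H.Adj (σ i') (σ p.2)} : Finset (Equiv.Perm V)))
      (4 * F / ((N - 1) * (N - 3))) (by
        rintro ⟨q, y⟩ hy
        have hy' : G.Adj q y := by simpa using hy
        by_cases hc : q ≠ i' ∧ y ≠ i' ∧ y ≠ i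
        · by_cases hqi : i = q
          · subst hqi
            simpa using pos3
          have := two_bound H hn hH' i i' q y hqi hc.2.1.symm hc.2.2 hy'.ne'
          simpa [hc] using this
        · simpa [hc] using pos3)
    rw [darts_card G hG] at this
    push_cast at this
    exact this
  have hu : (#{σ : Equiv.Perm V | ¬ Good G H i i' σ} : ℝ) ≤
      #E2 + #E6 + #E7 + #E4 + #E3 + #E5 := by
    have h := card_le_card hsub
    have u1 := card_union_le (E2 ∪ E6 ∪ E7 ∪ E4 ∪ E3) E5
    have u2 := card_union_le (E2 ∪ E6 ∪ E7 ∪ E4) E3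
    have u3 := card_union_le (E2 ∪ E6 ∪ E7) E4
    have u4 := card_union_le (E2 ∪ E6) E7
    have u5 := card_union_le E2 E6
    have : #{σ : Equiv.Perm V | ¬ Good G H i i' σ} ≤ #E2 + #E6 + #E7 + #E4 + #E3 + #E5 := by omega
    exact_mod_cast this
  have hfrac : (2 * N) * (4 * F / ((N - 1) * (N - 3))) ≤ 16 * F / (N - 1) := by
    rw [← mul_div_assoc, div_le_div_iff₀ (mul_pos (by linarith) (by linarith)) (by linarith)]
    have : 0 ≤ F * (N - 1) * (N - 6) :=
      mul_nonneg (mul_nonneg hF0.le (by linarith)) (by linarith)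
    nlinarith
  calc _ ≤ _ := hu
    _ ≤ 2 * (2 * F / (N - 1)) + 2 * (2 * F / (N - 1)) + 2 * (2 * F / (N - 1)) +
        2 * (4 * F / (N - 1)) + 16 * F / (N - 1) + 16 * F / (N - 1) := by linarith
    _ = _ := by ring

lemma dart_step (G H : SimpleGraph V) (hn : 6 ≤ Fintype.card V)
    (hG : ∀ a, #{c | G.Adj a c} = 2) (hH : ∀ a, #{c | H.Adj a c} = 2)
    (i i' : V) (hii : G.Adj i i') (m : ℕ) :
    |(#{σ : Equiv.Perm V | H.Adj (σ i) (σ i') ∧ Yc G H σ = m + 2} : ℝ) * (Fintype.card V - 1)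
      - 2 * #{σ : Equiv.Perm V | Yc G H σ = m}| ≤
      104 * (Fintype.card V).factorial / (Fintype.card V - 1) := by
  have hf := fibre_count H i i' hii.ne (fun σ => Yc G H σ = m + 2)
  set A := ((univ : Finset (Equiv.Perm V × V)).filter fun p => H.Adj (p.1 i) p.2 ∧
        Yc G H (Equiv.swap p.2 (p.1 i') * p.1) = m + 2) with hA
  set B := ((univ : Finset (Equiv.Perm V × V)).filter fun p => H.Adj (p.1 i) p.2 ∧
        Yc G H p.1 = m) with hB
  set C := ((univ : Finset (Equiv.Perm V × V)).filter fun p => H.Adj (p.1 i) p.2 ∧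
        ¬ Good G H i i' p.1) with hC
  have two : ∀ (P : Equiv.Perm V → Prop) [DecidablePred P], #((univ : Finset (Equiv.Perm V × V)).filter
      fun p => H.Adj (p.1 i) p.2 ∧ P p.1) = 2 * #{σ : Equiv.Perm V | P σ} := by
    intro P _
    have : #((univ : Finset (Equiv.Perm V × V)).filter fun p => H.Adj (p.1 i) p.2 ∧ P p.1) =
        ∑ σ ∈ ({σ : Equiv.Perm V | P σ} : Finset _), #{c | H.Adj (σ i) c} := by
      rw [← card_sigma]
      refine Finset.card_bij' (fun p _ => ⟨p.1, p.2⟩) (fun s _ => (s.1, s.2)) ?_ ?_ ?_ ?_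
      · rintro ⟨σ, b⟩ h
        simp at h ⊢
        exact h.symm
      · rintro ⟨σ, b⟩ h
        simp at h ⊢
        exact h.symm
      · simp
      · simp
    rw [this]
    simp [hH, mul_comm]
  have tB : #B = 2 * #{σ : Equiv.Perm V | Yc G H σ = m} :=
    two (fun σ => Yc G H σ = m)
  have tC : #C = 2 * #{σ : Equiv.Perm V | ¬ Good G H i i' σ} :=
    two (fun σ => ¬ Good G H i i' σ)
  have s1 : A ⊆ B ∪ C := by
    rintro ⟨σ, b⟩ h
    simp only [hA, hB, hC, mem_filter, mem_univ, true_and, mem_union] at h ⊢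
    by_cases hg : Good G H i i' σ
    · rw [good_step G H i i' hii σ hg b h.1] at h
      left
      exact ⟨h.1, by omega⟩
    · exact Or.inr ⟨h.1, hg⟩
  have s2 : B ⊆ A ∪ C := by
    rintro ⟨σ, b⟩ h
    simp only [hA, hB, hC, mem_filter, mem_univ, true_and, mem_union] at h ⊢
    by_cases hg : Good G H i i' σ
    · rw [good_step G H i i' hii σ hg b h.1]
      left
      exact ⟨h.1, by omega⟩
    · exact Or.inr ⟨h.1, hg⟩
  have c1 := (card_le_card s1).trans (card_union_le _ _)
  have c2 := (card_le_card s2).trans (card_union_le _ _)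
  have bad := bad_bound G H hn hG hH i i' hii
  have hcast : ((Fintype.card V : ℝ) - 1) = ((Fintype.card V - 1 : ℕ) : ℝ) := by
    rw [Nat.cast_sub (by omega)]; simp
  have e1 : (#{σ : Equiv.Perm V | H.Adj (σ i) (σ i') ∧ Yc G H σ = m + 2} : ℝ) *
      (Fintype.card V - 1) = #A := by
    rw [hcast]; exact_mod_cast hf.symm
  have e2 : 2 * (#{σ : Equiv.Perm V | Yc G H σ = m} : ℝ) = #B := by exact_mod_cast tB.symm
  have e3 : (#C : ℝ) = 2 * #{σ : Equiv.Perm V | ¬ Good G H i i' σ} := by exact_mod_cast tC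
  rw [e1, e2]
  have d1 : (#A : ℝ) ≤ #B + #C := by exact_mod_cast c1
  have d2 : (#B : ℝ) ≤ #A + #C := by exact_mod_cast c2
  have d3 : (#C : ℝ) ≤ 104 * (Fintype.card V).factorial / (Fintype.card V - 1) := by
    rw [e3]
    calc _ ≤ 2 * (52 * ((Fintype.card V).factorial : ℝ) / (Fintype.card V - 1)) := by linarith
      _ = _ := by ring
  rw [abs_le]
  constructor <;> linarith

lemma sum_Y (G H : SimpleGraph V) (P : Equiv.Perm V → Prop) [DecidablePred P] :
    ∑ σ ∈ ({σ : Equiv.Perm V | P σ} : Finset _), Yc G H σ =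
      ∑ p ∈ ({p : V × V | G.Adj p.1 p.2} : Finset _),
        #{σ : Equiv.Perm V | H.Adj (σ p.1) (σ p.2) ∧ P σ} := by
  have e1 : ∀ σ : Equiv.Perm V, Yc G H σ = ∑ p ∈ ({p : V × V | G.Adj p.1 p.2} : Finset _),
      if H.Adj (σ p.1) (σ p.2) then 1 else 0 := by
    intro σ
    rw [Yc, ← filter_filter, card_filter]
  simp_rw [e1]
  rw [sum_comm]
  refine sum_congr rfl fun p _ => ?_
  rw [← card_filter, filter_filter]
  congr 1
  ext σ
  simp [and_comm]

lemma recur (G H : SimpleGraph V) (hn : 6 ≤ Fintype.card V)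
    (hG : ∀ a, #{c | G.Adj a c} = 2) (hH : ∀ a, #{c | H.Adj a c} = 2) (m : ℕ) :
    |((m : ℝ) + 2) * #{σ : Equiv.Perm V | Yc G H σ = m + 2} * (Fintype.card V - 1)
      - 4 * Fintype.card V * #{σ : Equiv.Perm V | Yc G H σ = m}| ≤
      2 * Fintype.card V * (104 * (Fintype.card V).factorial / (Fintype.card V - 1)) := by
  have h := sum_Y G H (fun σ => Yc G H σ = m + 2)
  have h1 : ∑ σ ∈ ({σ : Equiv.Perm V | Yc G H σ = m + 2} : Finset _), Yc G H σ =
      #{σ : Equiv.Perm V | Yc G H σ = m + 2} * (m + 2) := by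
    rw [sum_congr rfl (g := fun _ => m + 2) (fun σ hσ => by simpa using hσ)]
    simp
  rw [h1] at h
  have h2 : ((m : ℝ) + 2) * #{σ : Equiv.Perm V | Yc G H σ = m + 2} =
      ∑ p ∈ ({p : V × V | G.Adj p.1 p.2} : Finset _),
        (#{σ : Equiv.Perm V | H.Adj (σ p.1) (σ p.2) ∧ Yc G H σ = m + 2} : ℝ) := by
    rw [mul_comm]
    exact_mod_cast h
  have h3 : 4 * (Fintype.card V : ℝ) * #{σ : Equiv.Perm V | Yc G H σ = m} =
      ∑ p ∈ ({p : V × V | G.Adj p.1 p.2} : Finset _),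
        2 * (#{σ : Equiv.Perm V | Yc G H σ = m} : ℝ) := by
    rw [sum_const, darts_card G hG, nsmul_eq_mul]
    push_cast
    ring
  rw [h2, h3, sum_mul, ← sum_sub_distrib]
  refine (abs_sum_le_sum_abs _ _).trans ?_
  refine (sum_le_card_nsmul _ _ _ fun p hp => dart_step G H hn hG hH p.1 p.2 (by simpa using hp) m).trans ?_
  rw [darts_card G hG, nsmul_eq_mul]
  push_cast
  exact le_refl _

lemma tail (G H : SimpleGraph V) (hn : 6 ≤ Fintype.card V)
    (hG : ∀ a, #{c | G.Adj a c} = 2) (hH : ∀ a, #{c | H.Adj a c} = 2) (K : ℕ) :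
    (K : ℝ) * #{σ : Equiv.Perm V | K ≤ Yc G H σ} ≤ 8 * (Fintype.card V).factorial := by
  have h := sum_Y G H (fun σ => K ≤ Yc G H σ)
  have h1 : #{σ : Equiv.Perm V | K ≤ Yc G H σ} * K ≤
      ∑ σ ∈ ({σ : Equiv.Perm V | K ≤ Yc G H σ} : Finset _), Yc G H σ := by
    rw [← smul_eq_mul]
    exact card_nsmul_le_sum _ _ _ (fun σ hσ => by simpa using hσ)
  rw [h] at h1
  have h6 : (6 : ℝ) ≤ Fintype.card V := by exact_mod_cast hn
  have h2 : (#{σ : Equiv.Perm V | K ≤ Yc G H σ} : ℝ) * K ≤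
      ∑ p ∈ ({p : V × V | G.Adj p.1 p.2} : Finset _),
        (#{σ : Equiv.Perm V | H.Adj (σ p.1) (σ p.2) ∧ K ≤ Yc G H σ} : ℝ) := by
    exact_mod_cast h1
  have h3 : ∑ p ∈ ({p : V × V | G.Adj p.1 p.2} : Finset _),
        (#{σ : Equiv.Perm V | H.Adj (σ p.1) (σ p.2) ∧ K ≤ Yc G H σ} : ℝ) ≤
        (2 * Fintype.card V) * (2 * (Fintype.card V).factorial / (Fintype.card V - 1)) := by
    refine (sum_le_card_nsmul _ _ (2 * ((Fintype.card V).factorial : ℝ) / ((Fintype.card V : ℝ) - 1))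
      fun p hp => ?_).trans ?_
    · have hp' : G.Adj p.1 p.2 := by simpa using hp
      refine le_trans ?_ (pair_bound H.Adj 2 (by omega) (fun a => (hH a).le) p.1 p.2 hp'.ne)
      exact_mod_cast card_le_card (fun σ hσ => by
        simp only [mem_filter, mem_univ, true_and] at hσ ⊢
        exact hσ.1)
    · rw [darts_card G hG, nsmul_eq_mul]
      push_cast
      exact le_refl _
  rw [mul_comm]
  refine (h2.trans h3).trans ?_
  rw [← mul_div_assoc, div_le_iff₀ (by linarith)]
  have hF0 : (0 : ℝ) < (Fintype.card V).factorial := by exact_mod_cast Nat.factorial_pos _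
  nlinarith

end HamPoisson

namespace HamPoisson
open Finset Classical

lemma Yc_eq {V : Type*} [Fintype V] [DecidableEq V] (G H : SimpleGraph V) (σ : Equiv.Perm V) :
    Yc G H σ = 2 * Nat.card (G.edgeSet ∩ (H.comap σ).edgeSet : Set (Sym2 V)) := by
  rw [← edgeSet_inf]
  have h := (G ⊓ H.comap σ).sum_degrees_eq_twice_card_edges
  rw [Nat.card_eq_fintype_card, ← SimpleGraph.edgeFinset_card]
  refine Eq.trans ?_ (h.trans (by congr!))
  have : Yc G H σ = ∑ a : V, #{c | G.Adj a c ∧ H.Adj (σ a) (σ c)} := by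
    rw [← card_sigma]
    refine Finset.card_bij' (fun p _ => ⟨p.1, p.2⟩) (fun s _ => (s.1, s.2)) ?_ ?_ ?_ ?_ <;> simp
  rw [this]
  refine sum_congr rfl fun a _ => ?_
  rw [← SimpleGraph.card_neighborFinset_eq_degree, SimpleGraph.neighborFinset_eq_filter]
  congr 1

lemma ham_comap {n : ℕ} (H : SimpleGraph (Fin n)) (σ : Equiv.Perm (Fin n)) :
    IsHamCycleGraph n (H.comap σ) ↔ IsHamCycleGraph n H := by
  unfold IsHamCycleGraph
  refine and_congr (SimpleGraph.Iso.comap σ H).connected_iff ?_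
  have : ∀ v, Nat.card ((H.comap σ).neighborSet v) = Nat.card (H.neighborSet (σ v)) := fun v =>
    Nat.card_congr ((SimpleGraph.Iso.comap σ H).mapNeighborSet v)
  simp_rw [this]
  exact ⟨fun h v => by simpa using h (σ.symm v), fun h v => h _⟩

lemma ham_exists {n : ℕ} (hn : 3 ≤ n) : ∃ H, IsHamCycleGraph n H := by
  obtain ⟨m, rfl⟩ := Nat.exists_eq_add_of_le' hn
  refine ⟨cycleGraph (m + 3), cycleGraph_connected, fun v => ?_⟩
  rw [Nat.card_eq_fintype_card, SimpleGraph.card_neighborSet_eq_degree]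
  exact cycleGraph_degree_three_le

lemma ham_deg {n : ℕ} {H : SimpleGraph (Fin n)} (h : IsHamCycleGraph n H) (a : Fin n) :
    #{c | H.Adj a c} = 2 := by
  rw [← h.2 a, Nat.card_eq_fintype_card, SimpleGraph.card_neighborSet_eq_degree,
    ← SimpleGraph.card_neighborFinset_eq_degree, SimpleGraph.neighborFinset_eq_filter]

/-- the finset of Hamiltonian cycles -/
noncomputable def Ham (n : ℕ) : Finset (SimpleGraph (Fin n)) := {H | IsHamCycleGraph n H}

/-- the probability in the statement -/
noncomputable def fr (n j : ℕ) : ℝ := (Nat.card {p : SimpleGraph (Fin n) × SimpleGraph (Fin n) //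
            IsHamCycleGraph n p.1 ∧ IsHamCycleGraph n p.2 ∧
              Nat.card (p.1.edgeSet ∩ p.2.edgeSet : Set (Sym2 (Fin n))) = j} : ℝ)
          / (Nat.card {H : SimpleGraph (Fin n) // IsHamCycleGraph n H} : ℝ) ^ 2

lemma fr_eq (n j : ℕ) : fr n j = (∑ p ∈ Ham n ×ˢ Ham n,
    (#{σ : Equiv.Perm (Fin n) | Yc p.1 p.2 σ = 2 * j} : ℝ)) / ((#(Ham n)) ^ 2 * n.factorial) := by
  set M := #{p ∈ Ham n ×ˢ Ham n |
    Nat.card (p.1.edgeSet ∩ p.2.edgeSet : Set (Sym2 (Fin n))) = j} with hM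
  have h1 : Nat.card {H : SimpleGraph (Fin n) // IsHamCycleGraph n H} = #(Ham n) := by
    rw [Nat.card_eq_fintype_card, Fintype.card_subtype, Ham]
  have h2 : Nat.card {p : SimpleGraph (Fin n) × SimpleGraph (Fin n) //
            IsHamCycleGraph n p.1 ∧ IsHamCycleGraph n p.2 ∧
              Nat.card (p.1.edgeSet ∩ p.2.edgeSet : Set (Sym2 (Fin n))) = j} = M := by
    rw [Nat.card_eq_fintype_card, Fintype.card_subtype, hM]
    congr 1
    ext p
    simp [Ham, and_assoc]
  have h3 : ∑ p ∈ Ham n ×ˢ Ham n, #{σ : Equiv.Perm (Fin n) | Yc p.1 p.2 σ = 2 * j} =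
      M * n.factorial := by
    simp_rw [card_filter (fun σ : Equiv.Perm (Fin n) => Yc _ _ σ = 2 * j)]
    rw [sum_comm]
    have : ∀ σ : Equiv.Perm (Fin n), (∑ p ∈ Ham n ×ˢ Ham n,
        if Yc p.1 p.2 σ = 2 * j then 1 else 0) = M := by
      intro σ
      rw [← card_filter, hM]
      refine Finset.card_bij' (fun p _ => (p.1, p.2.comap σ)) (fun p _ => (p.1, p.2.comap σ.symm))
        ?_ ?_ ?_ ?_
      · rintro ⟨G, H⟩ h
        simp only [mem_filter, mem_product, Ham, mem_univ, true_and, Yc_eq, ham_comap] at h ⊢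
        exact ⟨h.1, by omega⟩
      · rintro ⟨G, H⟩ h
        have e : (H.comap σ.symm).comap σ = H := by ext; simp
        simp only [mem_filter, mem_product, Ham, mem_univ, true_and, Yc_eq, ham_comap, e] at h ⊢
        exact ⟨h.1, by omega⟩
      · rintro ⟨G, H⟩ h
        have e : (H.comap σ).comap σ.symm = H := by ext; simp
        simp [e]
      · rintro ⟨G, H⟩ h
        have e : (H.comap σ.symm).comap σ = H := by ext; simp
        simp [e]
    simp_rw [this]
    rw [sum_const, card_univ, Fintype.card_perm, Fintype.card_fin, smul_eq_mul, mul_comm]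
  have h3' : (∑ p ∈ Ham n ×ˢ Ham n, (#{σ : Equiv.Perm (Fin n) | Yc p.1 p.2 σ = 2 * j} : ℝ)) =
      M * n.factorial := by exact_mod_cast h3
  rw [fr, h1, h2, h3']
  have : (n.factorial : ℝ) ≠ 0 := by exact_mod_cast (Nat.factorial_pos n).ne'
  rw [mul_div_mul_right _ _ this]

lemma T_pos {n : ℕ} (hn : 6 ≤ n) : (0 : ℝ) < (#(Ham n)) ^ 2 * n.factorial := by
  have h : 0 < #(Ham n) := by
    obtain ⟨H, hH⟩ := ham_exists (n := n) (by omega)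
    exact card_pos.2 ⟨H, by simp [Ham, hH]⟩
  have := Nat.factorial_pos n
  positivity

lemma ham_card_prod (n : ℕ) (c : ℝ) :
    ∑ _p ∈ Ham n ×ˢ Ham n, c = (#(Ham n)) ^ 2 * c := by
  rw [sum_const, card_product, nsmul_eq_mul]
  push_cast
  ring

lemma fr_recur {n : ℕ} (hn : 6 ≤ n) (j : ℕ) :
    |((j : ℝ) + 1) * fr n (j + 1) * (n - 1) - 2 * n * fr n j| ≤ 104 * (n / (n - 1)) := by
  have hT := T_pos hn
  rw [fr_eq, fr_eq]
  set T : ℝ := (#(Ham n)) ^ 2 * n.factorial with hTd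
  set A := ∑ p ∈ Ham n ×ˢ Ham n, (#{σ : Equiv.Perm (Fin n) | Yc p.1 p.2 σ = 2 * (j + 1)} : ℝ)
    with hA
  set B := ∑ p ∈ Ham n ×ˢ Ham n, (#{σ : Equiv.Perm (Fin n) | Yc p.1 p.2 σ = 2 * j} : ℝ) with hB
  have h : |(2 * (j : ℝ) + 2) * A * (n - 1) - 4 * n * B| ≤ T * (208 * (n / (n - 1))) := by
    have e : (2 * (j : ℝ) + 2) * A * (n - 1) - 4 * n * B = ∑ p ∈ Ham n ×ˢ Ham n,
        ((2 * (j : ℝ) + 2) * #{σ : Equiv.Perm (Fin n) | Yc p.1 p.2 σ = 2 * (j + 1)} * (n - 1)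
          - 4 * n * #{σ : Equiv.Perm (Fin n) | Yc p.1 p.2 σ = 2 * j}) := by
      rw [sum_sub_distrib, ← mul_sum, ← sum_mul, ← mul_sum]
    rw [e]
    refine (abs_sum_le_sum_abs _ _).trans ?_
    have e2 : T * (208 * (n / (n - 1))) = ∑ _p ∈ Ham n ×ˢ Ham n,
        (2 * (n : ℝ) * (104 * n.factorial / (n - 1))) := by
      rw [ham_card_prod, hTd]
      ring
    rw [e2]
    refine sum_le_sum fun p hp => ?_
    simp only [mem_product, Ham, mem_filter, mem_univ, true_and] at hp
    have := recur p.1 p.2 (by simpa using hn) (ham_deg hp.1) (ham_deg hp.2) (2 * j)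
    simp only [Fintype.card_fin] at this
    push_cast at this
    exact this
  have e : ((j : ℝ) + 1) * (A / T) * (n - 1) - 2 * n * (B / T) =
      ((2 * (j : ℝ) + 2) * A * (n - 1) - 4 * n * B) / (2 * T) := by
    field_simp
    ring
  rw [e, abs_div, abs_of_pos (by linarith : 0 < 2 * T), div_le_iff₀ (by linarith)]
  refine h.trans (le_of_eq ?_)
  ring

lemma fr_nonneg (n j : ℕ) : 0 ≤ fr n j := by unfold fr; positivity

lemma fr_sum {n : ℕ} (hn : 6 ≤ n) (K : ℕ) :
    ∑ j ∈ range K, fr n j ≤ 1 ∧ (K : ℝ) * (1 - ∑ j ∈ range K, fr n j) ≤ 4 := by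
  have hT := T_pos hn
  simp_rw [fr_eq]
  rw [← sum_div, sum_comm]
  set T : ℝ := (#(Ham n)) ^ 2 * n.factorial with hTd
  have key : ∀ p : SimpleGraph (Fin n) × SimpleGraph (Fin n),
      ∑ j ∈ range K, (#{σ : Equiv.Perm (Fin n) | Yc p.1 p.2 σ = 2 * j} : ℝ) +
      #{σ : Equiv.Perm (Fin n) | 2 * K ≤ Yc p.1 p.2 σ} = n.factorial := by
    intro p
    have h1 : #{σ : Equiv.Perm (Fin n) | ¬ 2 * K ≤ Yc p.1 p.2 σ} =
        ∑ j ∈ range K, #{σ : Equiv.Perm (Fin n) | Yc p.1 p.2 σ = 2 * j} := by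
      rw [card_eq_sum_card_fiberwise (f := fun σ => Yc p.1 p.2 σ / 2) (t := range K)]
      · refine sum_congr rfl fun j hj => ?_
        rw [filter_filter]
        congr 1
        ext σ
        have := Yc_eq p.1 p.2 σ
        simp only [mem_filter, mem_univ, true_and]
        rw [mem_range] at hj
        omega
      · intro σ hσ
        simp only [coe_filter, mem_univ, true_and, Set.mem_ofPred_eq, coe_range, Set.mem_Iio] at hσ ⊢
        omega
    have h2 := card_filter_add_card_filter_not (s := (univ : Finset (Equiv.Perm (Fin n))))
      (fun σ => 2 * K ≤ Yc p.1 p.2 σ)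
    rw [h1, card_univ, Fintype.card_perm, Fintype.card_fin, add_comm] at h2
    exact_mod_cast h2
  set S := ∑ p ∈ Ham n ×ˢ Ham n,
    ∑ j ∈ range K, (#{σ : Equiv.Perm (Fin n) | Yc p.1 p.2 σ = 2 * j} : ℝ) with hS
  set R := ∑ p ∈ Ham n ×ˢ Ham n, (#{σ : Equiv.Perm (Fin n) | 2 * K ≤ Yc p.1 p.2 σ} : ℝ) with hR
  have hSR : S + R = T := by
    rw [hS, hR, ← sum_add_distrib, sum_congr rfl (fun p _ => key p), ham_card_prod]
  have hR0 : 0 ≤ R := sum_nonneg fun _ _ => Nat.cast_nonneg _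
  have hRT : 2 * K * R ≤ 8 * T := by
    have e2 : 8 * T = ∑ _p ∈ Ham n ×ˢ Ham n, (8 * (n.factorial : ℝ)) := by
      rw [ham_card_prod, hTd]
      ring
    rw [hR, mul_sum, e2]
    refine sum_le_sum fun p hp => ?_
    simp only [mem_product, Ham, mem_filter, mem_univ, true_and] at hp
    have := tail p.1 p.2 (by simpa using hn) (ham_deg hp.1) (ham_deg hp.2) (2 * K)
    simp only [Fintype.card_fin] at this
    push_cast at this
    exact this
  constructor
  · rw [div_le_one hT]
    linarith
  · have : 1 - S / T = R / T := by
      rw [← hSR]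
      rw [← hSR] at hT
      field_simp
      ring
    rw [this, ← mul_div_assoc, div_le_iff₀ hT]
    linarith

lemma fr_le_one {n : ℕ} (hn : 6 ≤ n) (j : ℕ) : fr n j ≤ 1 :=
  le_trans (single_le_sum (f := fun j => fr n j) (fun k _ => fr_nonneg n k) (self_mem_range_succ j))
    (fr_sum hn (j + 1)).1

lemma tendsto_inv : Tendsto (fun n : ℕ => (1 : ℝ) / ((n : ℝ) - 1)) atTop (nhds 0) := by
  apply Tendsto.div_atTop tendsto_const_nhds
  exact tendsto_atTop_add_const_right _ _ tendsto_natCast_atTop_atTop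

lemma fr_step (j : ℕ) :
    Tendsto (fun n => ((j : ℝ) + 1) * fr n (j + 1) - 2 * fr n j) atTop (nhds 0) := by
  have hlim : Tendsto (fun n : ℕ => 210 * ((1 : ℝ) / ((n : ℝ) - 1))) atTop (nhds 0) := by
    simpa using tendsto_inv.const_mul 210
  refine squeeze_zero_norm' ?_ hlim
  filter_upwards [eventually_ge_atTop 6] with n hn
  have h := fr_recur hn j
  have h0 := fr_nonneg n j
  have h1 := fr_le_one hn j
  have h6 : (6 : ℝ) ≤ n := by exact_mod_cast hn
  have hpos : (0 : ℝ) < n - 1 := by linarith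
  have h2 : (n : ℝ) / (n - 1) ≤ 2 := by
    rw [div_le_iff₀ hpos]
    linarith
  rw [Real.norm_eq_abs, ← mul_div_assoc, mul_one, le_div_iff₀ hpos]
  have e : |((j : ℝ) + 1) * fr n (j + 1) - 2 * fr n j| * ((n : ℝ) - 1) =
      |(((j : ℝ) + 1) * fr n (j + 1) - 2 * fr n j) * ((n : ℝ) - 1)| := by
    rw [abs_mul, abs_of_pos hpos]
  rw [e]
  rw [abs_le] at h ⊢
  constructor <;> nlinarith

lemma fr_rel (j : ℕ) :
    Tendsto (fun n => fr n j - 2 ^ j / (j.factorial : ℝ) * fr n 0) atTop (nhds 0) := by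
  induction j with
  | zero => simp
  | succ j ih =>
    have h := ((fr_step j).add (ih.const_mul 2)).mul_const (1 / ((j : ℝ) + 1))
    simp only [mul_zero, add_zero, zero_mul] at h
    refine h.congr fun n => ?_
    rw [Nat.factorial_succ]
    have : (j.factorial : ℝ) ≠ 0 := by exact_mod_cast (Nat.factorial_pos j).ne'
    push_cast
    field_simp
    ring

lemma fr_zero : Tendsto (fun n => fr n 0) atTop (nhds (Real.exp (-2))) := by
  have hexp : Tendsto (fun K => ∑ j ∈ range K, (2 : ℝ) ^ j / (j.factorial : ℝ)) atTop
      (nhds (Real.exp 2)) := by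
    have := (NormedSpace.expSeries_div_hasSum_exp (2 : ℝ)).tendsto_sum_nat
    rwa [← Real.exp_eq_exp_ℝ] at this
  have hmain : Tendsto (fun n => fr n 0 * Real.exp 2 - 1) atTop (nhds 0) := by
    rw [Metric.tendsto_atTop]
    intro ε hε
    rw [Metric.tendsto_atTop] at hexp
    obtain ⟨K1, hK1⟩ := hexp (ε / 3) (by linarith)
    obtain ⟨K2, hK2⟩ := exists_nat_gt (12 / ε)
    set K := max K1 (K2 + 1) with hK
    have hS := hK1 K (le_max_left _ _)
    have hKpos : (0 : ℝ) < K := by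
      have : 0 < K := lt_of_lt_of_le (Nat.succ_pos _) (le_max_right K1 (K2 + 1))
      exact_mod_cast this
    have hKε : 12 / ε < K := by
      have : (K2 : ℝ) ≤ K := by exact_mod_cast (Nat.le_succ K2).trans (le_max_right K1 (K2 + 1))
      linarith
    rw [div_lt_iff₀ hε] at hKε
    set S := ∑ j ∈ range K, (2 : ℝ) ^ j / (j.factorial : ℝ) with hSd
    have hsum : Tendsto (fun n => ∑ j ∈ range K,
        (fr n j - 2 ^ j / (j.factorial : ℝ) * fr n 0)) atTop (nhds 0) := by
      simpa using tendsto_finsetSum (range K) (fun j _ => fr_rel j)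
    rw [Metric.tendsto_atTop] at hsum
    obtain ⟨N, hN⟩ := hsum (ε / 3) (by linarith)
    refine ⟨max N 6, fun n hn => ?_⟩
    have h1 := hN n ((le_max_left _ _).trans hn)
    have hn6 : 6 ≤ n := (le_max_right _ _).trans hn
    obtain ⟨h2, h3⟩ := fr_sum hn6 K
    have h4 := fr_nonneg n 0
    have h5 := fr_le_one hn6 0
    rw [sum_sub_distrib, ← sum_mul, ← hSd] at h1
    set Q := ∑ j ∈ range K, fr n j with hQ
    rw [Real.dist_eq, sub_zero, abs_lt] at h1 ⊢
    rw [Real.dist_eq, abs_lt] at hS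
    have h6 : 1 - Q < ε / 3 := by
      by_contra hcon
      push Not at hcon
      have := mul_le_mul_of_nonneg_left hcon hKpos.le
      linarith
    constructor <;> nlinarith
  have := (hmain.add_const 1).mul_const (Real.exp (-2))
  simp only [zero_add, one_mul] at this
  refine this.congr fun n => ?_
  rw [sub_add_cancel, mul_assoc, ← Real.exp_add]
  simp

lemma fr_lim (j : ℕ) :
    Tendsto (fun n => fr n j) atTop (nhds (Real.exp (-2) * 2 ^ j / (Nat.factorial j : ℝ))) := by
  have h := (fr_rel j).add (fr_zero.const_mul (2 ^ j / (j.factorial : ℝ)))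
  rw [zero_add] at h
  have e : Real.exp (-2) * 2 ^ j / (Nat.factorial j : ℝ) =
    2 ^ j / (j.factorial : ℝ) * Real.exp (-2) := by ring
  rw [e]
  refine h.congr fun n => ?_
  ring

end HamPoisson

/-- Let `π, π'` be two independent uniformly random Hamiltonian cycles on
`K_n`. Then the number of common edges `|E(π) ∩ E(π')|` converges in
distribution to `Poisson(2)` as `n → ∞`: for every `j`,
`P(|E(π) ∩ E(π')| = j) → e^{-2} 2^j / j!`. -/
theorem ham_cycles_intersection_poisson_two (j : ℕ) :
    Tendsto (fun n : ℕ =>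
        (Nat.card {p : SimpleGraph (Fin n) × SimpleGraph (Fin n) //
            IsHamCycleGraph n p.1 ∧ IsHamCycleGraph n p.2 ∧
              Nat.card (p.1.edgeSet ∩ p.2.edgeSet : Set (Sym2 (Fin n))) = j} : ℝ)
          / (Nat.card {H : SimpleGraph (Fin n) // IsHamCycleGraph n H} : ℝ) ^ 2)
      atTop (nhds (Real.exp (-2) * 2 ^ j / (Nat.factorial j : ℝ))) := by
  exact HamPoisson.fr_lim j
end
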